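/- Hitting probability versus exit probability: let λ ≥ 1, suppose R_eff(0, B(0,R)^c) ≥ R/λ and let 0 < ε ≤ 1/(2λ). Then for every y ∈ B(0,εR), the simple random walk started at y hits 0 before exiting B(0,R) with probability at least 1 − ελ/(1−ελ) ≥ 1 − 2ελ; and started at 0 it hits y before exiting B(0,R) with probability at least 1 − ελ. -/

import Mathlib

open scoped ENNReal

attribute [local instance] Classical.propDecidable

variable {V : Type*}

/-- Dirichlet energy (with values in `ℝ≥0∞`) of a function on the vertices of a graph,
with unit resistors on the edges: `E(f,f) = (1/2) ∑_{x∼y} (f x - f y)^2`. -/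
noncomputable def eEnergy (G : SimpleGraph V) (f : V → ℝ) : ℝ≥0∞ :=
  2⁻¹ * ∑' e : {p : V × V // G.Adj p.1 p.2}, ENNReal.ofReal ((f e.val.1 - f e.val.2) ^ 2)

/-- Effective resistance between two sets of vertices, defined variationally:
`Reff(A,B)⁻¹ = inf { E(f,f) : f|_A = 1, f|_B = 0 }`. -/
noncomputable def effRes (G : SimpleGraph V) (A B : Set V) : ℝ≥0∞ :=
  (⨅ f ∈ {f : V → ℝ | (∀ a ∈ A, f a = 1) ∧ (∀ b ∈ B, f b = 0)}, eEnergy G f)⁻¹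

/-- Degree of a vertex. -/
noncomputable def vdeg (G : SimpleGraph V) (x : V) : ℕ := (G.neighborSet x).ncard

/-- One-step transition probability of the simple random walk:
`P^x(X_1 = y) = 1/μ_x` for `y ∼ x`, and `0` otherwise. -/
noncomputable def stepP (G : SimpleGraph V) (x y : V) : ℝ :=
  (G.neighborSet x).indicator (fun _ => ((vdeg G x : ℝ))⁻¹) y

/-- `walkP G n x y = P^x(X_n = y)`, the `n`-step transition probability. -/
noncomputable def walkP (G : SimpleGraph V) : ℕ → V → V → ℝ
  | 0, x, y => if x = y then 1 else 0
  | n + 1, x, y => ∑' z : V, stepP G x z * walkP G n z y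

/-- The heat kernel `p_n(x,y) = P^x(X_n = y)/μ_y`. -/
noncomputable def hkP (G : SimpleGraph V) (n : ℕ) (x y : V) : ℝ :=
  walkP G n x y / (vdeg G y : ℝ)

/-- `killedP G B n x y = P^x(X_n = y, n < τ_B)`, the transition probability of the walk
killed upon exiting `B` (the path stays in `B` up to and including time `n`). -/
noncomputable def killedP (G : SimpleGraph V) (B : Set V) : ℕ → V → V → ℝ
  | 0, x, y => if x = y ∧ x ∈ B then 1 else 0
  | n + 1, x, y => ∑' z : V, B.indicator (fun w => stepP G w z) x * killedP G B n z y

/-- `exitTail G B x n = P^x(τ_B > n)`, the tail of the exit time of `B`. -/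
noncomputable def exitTail (G : SimpleGraph V) (B : Set V) (x : V) (n : ℕ) : ℝ :=
  ∑' y : V, killedP G B n x y

/-- `meanExit G B x = E^x τ_B`, the mean exit time of `B`. -/
noncomputable def meanExit (G : SimpleGraph V) (B : Set V) (x : V) : ℝ :=
  ∑' n : ℕ, exitTail G B x n

/-- `firstHitP G B y n x = P^x(T_y = n, n < τ_B)`: the probability that the walk started
at `x` first hits `y` at time `n`, before exiting `B`. -/
noncomputable def firstHitP (G : SimpleGraph V) (B : Set V) (y : V) : ℕ → V → ℝ
  | 0, x => if x = y ∧ x ∈ B then 1 else 0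
  | n + 1, x => ∑' z : V, (B \ {y}).indicator (fun w => stepP G w z) x * firstHitP G B y n z

/-- The Green kernel of the walk killed on exiting `B`:
`g_B(x,y) = μ_y⁻¹ ∑_{k≥0} P^x(X_k = y, k < τ_B)`. -/
noncomputable def greenB (G : SimpleGraph V) (B : Set V) (x y : V) : ℝ :=
  (∑' n : ℕ, killedP G B n x y) / (vdeg G y : ℝ)

/-!
Let `u = P^·(T_a < τ_B)` and `w = P^·(T_b < τ_B)`. Both vanish off `B` and are harmonic on `B` away
from `a`, respectively `b`, so `u` minimises the Dirichlet energy and `E(u) = Reff(a, Bᶜ)⁻¹`.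
The combination `q = u - u(b) w` also vanishes at `b`, and Green's identity gives
`E(q) = q(a) E(u)`. On the other hand Cauchy–Schwarz along a shortest path from `a` to `b` gives
`q(a)² ≤ d(a, b) E(q)`. Together these yield
`1 - P^b(T_a < τ_B) P^a(T_b < τ_B) = q(a) ≤ d(a, b) / Reff(a, Bᶜ)`,
which bounds both hitting probabilities from below at once.
-/

section DirichletForm

/-- The (positive) combinatorial Laplacian `Δf(x) = ∑_{z ∼ x} (f(x) - f(z))` of a graph with unit
conductances; `f` is harmonic at `x` when it vanishes there. -/
def graphLaplacian (G : SimpleGraph V) [G.LocallyFinite] (f : V → ℝ) (x : V) : ℝ :=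
  ∑ z ∈ G.neighborFinset x, (f x - f z)

/-- The Dirichlet form `E(f,g) = (1/2) ∑_{x∼y} (f x - f y) (g x - g y)`, the polarisation of
`eEnergy`. It is a real-valued `tsum`, hence meaningful when the family is summable, for instance
when `f` or `g` has finite support. -/
noncomputable def dirichletForm (G : SimpleGraph V) (f g : V → ℝ) : ℝ :=
  2⁻¹ * ∑' e : {p : V × V // G.Adj p.1 p.2},
    (f e.val.1 - f e.val.2) * (g e.val.1 - g e.val.2)

variable {G : SimpleGraph V}

lemma dirichletForm_comm (f g : V → ℝ) : dirichletForm G f g = dirichletForm G g f := by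
  simp only [dirichletForm, mul_comm]

lemma dirichletForm_self_nonneg (f : V → ℝ) : 0 ≤ dirichletForm G f f :=
  mul_nonneg (by norm_num) (tsum_nonneg fun _ => mul_self_nonneg _)

lemma dirichletForm_const_mul_left (c : ℝ) (f g : V → ℝ) :
    dirichletForm G (fun x => c * f x) g = c * dirichletForm G f g := by
  simp only [dirichletForm, ← mul_sub, mul_assoc, tsum_mul_left]
  ring

variable [G.LocallyFinite] {S : Finset V} {f g : V → ℝ}

lemma hasSum_adj_of_eq_zero_of_fst_notMem {φ : V → V → ℝ} (hφ : ∀ x ∉ S, ∀ z, φ x z = 0) :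
    HasSum (fun e : {p : V × V // G.Adj p.1 p.2} => φ e.val.1 e.val.2)
      (∑ x ∈ S, ∑ z ∈ G.neighborFinset x, φ x z) := by
  rw [← (Equiv.subtypeProdEquivSigmaSubtype G.Adj).symm.hasSum_iff]
  have hsum : ∑ x ∈ S, ∑ z ∈ G.neighborFinset x, φ x z =
      ∑ s ∈ S.sigma fun x => (Finset.univ : Finset (G.neighborSet x)), φ s.1 s.2 := by
    rw [Finset.sum_sigma]
    exact Finset.sum_congr rfl fun x _ => Finset.sum_subtype _ (by simp) _
  rw [hsum]
  refine hasSum_sum_of_ne_finset_zero fun s hs => hφ s.1 (fun hmem => hs ?_) s.2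
  exact Finset.mem_sigma.2 ⟨hmem, Finset.mem_univ _⟩

lemma hasSum_dirichletForm (f : V → ℝ) (hg : ∀ x ∉ S, g x = 0) :
    HasSum (fun e : {p : V × V // G.Adj p.1 p.2} =>
        (f e.val.1 - f e.val.2) * (g e.val.1 - g e.val.2))
      (2 * ∑ x ∈ S, g x * graphLaplacian G f x) := by
  have hfst : HasSum (fun e : {p : V × V // G.Adj p.1 p.2} =>
      g e.val.1 * (f e.val.1 - f e.val.2)) (∑ x ∈ S, g x * graphLaplacian G f x) := by
    simp only [graphLaplacian, Finset.mul_sum]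
    exact hasSum_adj_of_eq_zero_of_fst_notMem (φ := fun x z => g x * (f x - f z))
      fun x hx z => by rw [hg x hx, zero_mul]
  let swap : {p : V × V // G.Adj p.1 p.2} ≃ {p : V × V // G.Adj p.1 p.2} :=
    (Equiv.prodComm V V).subtypeEquiv fun p => G.adj_comm p.1 p.2
  have hsnd : HasSum (fun e : {p : V × V // G.Adj p.1 p.2} =>
      g e.val.2 * (f e.val.2 - f e.val.1)) (∑ x ∈ S, g x * graphLaplacian G f x) :=
    swap.hasSum_iff.2 hfst
  rw [two_mul]
  exact (hfst.add hsnd).congr_fun fun e => by ring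

lemma dirichletForm_eq_sum_mul_graphLaplacian (f : V → ℝ) (hg : ∀ x ∉ S, g x = 0) :
    dirichletForm G f g = ∑ x ∈ S, g x * graphLaplacian G f x := by
  rw [dirichletForm, (hasSum_dirichletForm f hg).tsum_eq, inv_mul_cancel_left₀ two_ne_zero]

lemma dirichletForm_sub_left (f₁ f₂ : V → ℝ) (hg : ∀ x ∉ S, g x = 0) :
    dirichletForm G (fun x => f₁ x - f₂ x) g = dirichletForm G f₁ g - dirichletForm G f₂ g := by
  simp only [dirichletForm_eq_sum_mul_graphLaplacian _ hg, graphLaplacian, ← Finset.sum_sub_distrib,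
    ← mul_sub]
  exact Finset.sum_congr rfl fun x _ => congrArg _ (Finset.sum_congr rfl fun z _ => by ring)

lemma eEnergy_eq_ofReal_dirichletForm (hf : ∀ x ∉ S, f x = 0) :
    eEnergy G f = ENNReal.ofReal (dirichletForm G f f) := by
  have hsummable := (hasSum_dirichletForm (G := G) f hf).summable
  rw [dirichletForm, ENNReal.ofReal_mul (by norm_num), ENNReal.ofReal_inv_of_pos two_pos,
    ENNReal.ofReal_ofNat, ENNReal.ofReal_tsum_of_nonneg (fun _ => mul_self_nonneg _) hsummable]
  simp only [eEnergy, sq]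

lemma dirichletForm_self_le_of_harmonic {A : Set V} {u : V → ℝ}
    (hu : ∀ x ∉ S, u x = 0) (hf : ∀ x ∉ S, f x = 0) (hfu : ∀ x ∈ A, f x = u x)
    (hharm : ∀ x ∈ S, x ∉ A → graphLaplacian G u x = 0) :
    dirichletForm G u u ≤ dirichletForm G f f := by
  let h : V → ℝ := fun x => f x - u x
  have hh : ∀ x ∉ S, h x = 0 := fun x hx => by simp only [h, hf x hx, hu x hx, sub_zero]
  have horth : dirichletForm G u h = 0 := by
    rw [dirichletForm_eq_sum_mul_graphLaplacian u hh]
    refine Finset.sum_eq_zero fun x hx => ?_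
    by_cases hxA : x ∈ A
    · simp only [h, hfu x hxA, sub_self, zero_mul]
    · rw [hharm x hx hxA, mul_zero]
  have hfh : dirichletForm G f h = dirichletForm G f f - dirichletForm G u f := by
    rw [dirichletForm_comm, dirichletForm_sub_left f u hf]
  have huh : dirichletForm G u h = dirichletForm G u f - dirichletForm G u u := by
    rw [dirichletForm_comm, dirichletForm_sub_left f u hu, dirichletForm_comm f u]
  have hhh : dirichletForm G h h = dirichletForm G f h - dirichletForm G u h :=
    dirichletForm_sub_left f u hh
  linarith [dirichletForm_self_nonneg (G := G) h]

end DirichletForm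

section EffectiveResistance

variable {G : SimpleGraph V} {a b : V}

lemma effRes_eq_zero_of_mem_inter {A B : Set V} (ha : a ∈ A ∩ B) : effRes G A B = 0 := by
  rw [effRes, ENNReal.inv_eq_zero]
  refine iInf₂_eq_top.2 fun f hf => ?_
  exact absurd ((hf.1 a ha.1).symm.trans (hf.2 a ha.2)) one_ne_zero

/-- Each edge of a path is traversed once, but counts twice in the sum defining `eEnergy`. -/
lemma sum_sq_sub_getVert_le_eEnergy {p : G.Walk a b} (hp : p.IsPath) (f : V → ℝ) :
    ∑ i : Fin p.length, ENNReal.ofReal ((f (p.getVert i) - f (p.getVert (i + 1))) ^ 2) ≤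
      eEnergy G f := by
  let edge : Fin p.length ⊕ Fin p.length → {p : V × V // G.Adj p.1 p.2} := Sum.elim
    (fun i => ⟨(p.getVert i, p.getVert (i + 1)), p.adj_getVert_succ i.2⟩)
    (fun i => ⟨(p.getVert (i + 1), p.getVert i), (p.adj_getVert_succ i.2).symm⟩)
  have hinj : ∀ {i j : ℕ}, i ≤ p.length → j ≤ p.length → p.getVert i = p.getVert j → i = j :=
    fun hi hj h => hp.getVert_injOn hi hj h
  have hedge : Function.Injective edge := by
    rintro (i | i) (j | j) hij <;>
      obtain ⟨hfst, hsnd⟩ := Prod.ext_iff.1 (Subtype.ext_iff.1 hij) <;>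
      have hfst := hinj (by omega) (by omega) hfst <;>
      have hsnd := hinj (by omega) (by omega) hsnd
    · exact congrArg _ (Fin.ext hfst)
    · omega
    · omega
    · exact congrArg _ (Fin.ext hsnd)
  have hle := ENNReal.tsum_comp_le_tsum_of_injective hedge
    fun e => ENNReal.ofReal ((f e.val.1 - f e.val.2) ^ 2)
  rw [tsum_fintype, Fintype.sum_sum_type] at hle
  simp only [edge, Sum.elim_inl, Sum.elim_inr, sub_sq_comm (f (p.getVert (_ + 1))), ← two_mul]
    at hle
  rw [eEnergy, ← ENNReal.mul_le_iff_le_inv two_ne_zero ENNReal.ofNat_ne_top]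
  exact hle

lemma ofReal_sq_sub_le_length_mul_eEnergy {p : G.Walk a b} (hp : p.IsPath) (f : V → ℝ) :
    ENNReal.ofReal ((f a - f b) ^ 2) ≤ p.length * eEnergy G f := by
  let incr : ℕ → ℝ := fun i => f (p.getVert i) - f (p.getVert (i + 1))
  have htelescope : f a - f b = ∑ i : Fin p.length, incr i := by
    rw [Fin.sum_univ_eq_sum_range incr, Finset.sum_range_sub' fun i => f (p.getVert i),
      p.getVert_zero, p.getVert_length]
  have hcauchy : (f a - f b) ^ 2 ≤ p.length * ∑ i : Fin p.length, incr i ^ 2 := by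
    simpa [htelescope] using
      sq_sum_le_card_mul_sum_sq (s := Finset.univ) (f := fun i : Fin p.length => incr i)
  calc ENNReal.ofReal ((f a - f b) ^ 2)
      ≤ ENNReal.ofReal (p.length * ∑ i : Fin p.length, incr i ^ 2) :=
        ENNReal.ofReal_le_ofReal hcauchy
    _ = p.length * ∑ i : Fin p.length, ENNReal.ofReal (incr i ^ 2) := by
        rw [ENNReal.ofReal_mul (Nat.cast_nonneg _), ENNReal.ofReal_natCast,
          ENNReal.ofReal_sum_of_nonneg fun i _ => sq_nonneg _]
    _ ≤ p.length * eEnergy G f := by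
        gcongr
        exact sum_sq_sub_getVert_le_eEnergy hp f

/-- This is the bound `Reff(a, b) ≤ d(a, b)`, homogenised in the test function. -/
lemma ofReal_sq_sub_le_dist_mul_eEnergy (hab : G.Reachable a b) (f : V → ℝ) :
    ENNReal.ofReal ((f a - f b) ^ 2) ≤ G.dist a b * eEnergy G f := by
  obtain ⟨p, hp, hlen⟩ := hab.exists_path_of_dist
  exact hlen ▸ ofReal_sq_sub_le_length_mul_eEnergy hp f

end EffectiveResistance

section HittingProbability

/-- `hitProb G B y x = P^x(T_y < τ_B)`, the probability that the walk started at `x` hits `y`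
before exiting `B`. -/
noncomputable def hitProb (G : SimpleGraph V) (B : Set V) (y x : V) : ℝ :=
  ∑' k : ℕ, firstHitP G B y k x

/-- The combination `P^x(T_a < τ_B) - P^b(T_a < τ_B) P^x(T_b < τ_B)` of hitting probabilities. It
vanishes at `b` and off `B`, and is a multiple of `P^x(T_a < T_b ∧ τ_B)`, the potential
at `x` when `a` carries a voltage and `b` and `Bᶜ` are earthed. -/
noncomputable def hitPotential (G : SimpleGraph V) (B : Set V) (a b x : V) : ℝ :=
  hitProb G B a x - hitProb G B a b * hitProb G B b x

variable {G : SimpleGraph V} {B : Set V} {a b x y : V}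

lemma firstHitP_zero_of_mem_diff (hx : x ∈ B \ {y}) : firstHitP G B y 0 x = 0 :=
  if_neg fun h => hx.2 h.1

lemma firstHitP_zero_le_one (x : V) : firstHitP G B y 0 x ≤ 1 := by
  rw [firstHitP]
  split_ifs <;> norm_num

lemma firstHitP_succ_of_notMem_diff (n : ℕ) (hx : x ∉ B \ {y}) :
    firstHitP G B y (n + 1) x = 0 := by
  simp only [firstHitP, Set.indicator_of_notMem hx, zero_mul, tsum_zero]

lemma hitProb_of_notMem (hx : x ∉ B) : hitProb G B y x = 0 := by
  have hzero : ∀ k, firstHitP G B y k x = 0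
    | 0 => if_neg fun h => hx h.2
    | n + 1 => firstHitP_succ_of_notMem_diff n fun h => hx h.1
  simp only [hitProb, hzero, tsum_zero]

lemma hitProb_self (hy : y ∈ B) : hitProb G B y y = 1 := by
  have hsucc : ∀ k ≠ 0, firstHitP G B y k y = 0 := by
    rintro (_ | n) hk
    · exact absurd rfl hk
    · exact firstHitP_succ_of_notMem_diff n fun h => h.2 rfl
  rw [hitProb, tsum_eq_single 0 hsucc]
  exact if_pos ⟨rfl, hy⟩

lemma hitPotential_of_notMem (hx : x ∉ B) : hitPotential G B a b x = 0 := by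
  simp only [hitPotential, hitProb_of_notMem hx, mul_zero, sub_zero]

lemma hitPotential_right : hitPotential G B a b b = 0 := by
  by_cases hb : b ∈ B
  · rw [hitPotential, hitProb_self hb, mul_one, sub_self]
  · exact hitPotential_of_notMem hb

lemma hitPotential_left (ha : a ∈ B) :
    hitPotential G B a b a = 1 - hitProb G B a b * hitProb G B b a := by
  rw [hitPotential, hitProb_self ha]

variable [G.LocallyFinite]

lemma vdeg_eq_degree (x : V) : vdeg G x = G.degree x := by
  rw [vdeg, Set.ncard_eq_toFinset_card', ← SimpleGraph.card_neighborFinset_eq_degree]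
  rfl

lemma tsum_stepP_mul (x : V) (f : V → ℝ) :
    ∑' z, stepP G x z * f z = (G.degree x : ℝ)⁻¹ * ∑ z ∈ G.neighborFinset x, f z := by
  rw [tsum_eq_sum (s := G.neighborFinset x), Finset.mul_sum]
  · refine Finset.sum_congr rfl fun z hz => ?_
    have hadj : z ∈ G.neighborSet x := (G.mem_neighborFinset x z).1 hz
    rw [stepP, Set.indicator_of_mem hadj, vdeg_eq_degree]
  · intro z hz
    have hnadj : z ∉ G.neighborSet x := mt (G.mem_neighborFinset x z).2 hz
    rw [stepP, Set.indicator_of_notMem hnadj, zero_mul]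

lemma firstHitP_succ_of_mem_diff (n : ℕ) (hx : x ∈ B \ {y}) :
    firstHitP G B y (n + 1) x =
      (G.degree x : ℝ)⁻¹ * ∑ z ∈ G.neighborFinset x, firstHitP G B y n z := by
  rw [← tsum_stepP_mul, firstHitP]
  simp only [Set.indicator_of_mem hx]

lemma firstHitP_nonneg (n : ℕ) (x : V) : 0 ≤ firstHitP G B y n x := by
  induction n generalizing x with
  | zero => rw [firstHitP]; split_ifs <;> norm_num
  | succ n ih =>
    by_cases hx : x ∈ B \ {y}
    · rw [firstHitP_succ_of_mem_diff n hx]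
      exact mul_nonneg (by positivity) (Finset.sum_nonneg fun z _ => ih z)
    · rw [firstHitP_succ_of_notMem_diff n hx]

lemma sum_range_firstHitP_le_one (n : ℕ) (x : V) :
    ∑ k ∈ Finset.range n, firstHitP G B y k x ≤ 1 := by
  induction n generalizing x with
  | zero => simp
  | succ n ih =>
    rw [Finset.sum_range_succ']
    by_cases hx : x ∈ B \ {y}
    · simp only [firstHitP_succ_of_mem_diff _ hx, firstHitP_zero_of_mem_diff hx, add_zero]
      calc ∑ k ∈ Finset.range n,
            (G.degree x : ℝ)⁻¹ * ∑ z ∈ G.neighborFinset x, firstHitP G B y k z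
          = (G.degree x : ℝ)⁻¹ *
              ∑ z ∈ G.neighborFinset x, ∑ k ∈ Finset.range n, firstHitP G B y k z := by
            rw [← Finset.mul_sum, Finset.sum_comm]
        _ ≤ (G.degree x : ℝ)⁻¹ * ∑ z ∈ G.neighborFinset x, 1 := by gcongr; exact ih _
        _ = (G.degree x : ℝ)⁻¹ * G.degree x := by simp
        _ ≤ 1 := inv_mul_le_one
    · simpa only [firstHitP_succ_of_notMem_diff _ hx, Finset.sum_const_zero, zero_add]
        using firstHitP_zero_le_one x

lemma summable_firstHitP (x : V) : Summable fun k => firstHitP G B y k x :=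
  summable_of_sum_range_le (fun k => firstHitP_nonneg k x) fun n => sum_range_firstHitP_le_one n x

lemma hitProb_nonneg (x : V) : 0 ≤ hitProb G B y x :=
  tsum_nonneg fun k => firstHitP_nonneg k x

lemma hitProb_le_one (x : V) : hitProb G B y x ≤ 1 :=
  Real.tsum_le_of_sum_range_le (fun k => firstHitP_nonneg k x)
    fun n => sum_range_firstHitP_le_one n x

lemma hitProb_eq_average (hx : x ∈ B \ {y}) :
    hitProb G B y x = (G.degree x : ℝ)⁻¹ * ∑ z ∈ G.neighborFinset x, hitProb G B y z := by
  rw [hitProb, (summable_firstHitP x).tsum_eq_zero_add, firstHitP_zero_of_mem_diff hx, zero_add]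
  simp only [firstHitP_succ_of_mem_diff _ hx]
  rw [tsum_mul_left, Summable.tsum_finsetSum fun z _ => summable_firstHitP z]
  rfl

lemma graphLaplacian_hitProb (hx : x ∈ B \ {y}) : graphLaplacian G (hitProb G B y) x = 0 := by
  rw [graphLaplacian, Finset.sum_sub_distrib, Finset.sum_const, G.card_neighborFinset_eq_degree,
    nsmul_eq_mul, sub_eq_zero]
  obtain hdeg | hdeg := eq_or_ne (G.degree x) 0
  · have hempty : G.neighborFinset x = ∅ := by
      rwa [← Finset.card_eq_zero, G.card_neighborFinset_eq_degree]
    rw [hdeg, hempty, Nat.cast_zero, zero_mul, Finset.sum_empty]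
  · rw [hitProb_eq_average hx, mul_inv_cancel_left₀ (Nat.cast_ne_zero.2 hdeg)]

end HittingProbability

section HittingAndResistance

variable {G : SimpleGraph V} [G.LocallyFinite] {S : Finset V} {a b : V}

lemma dirichletForm_hitProb_left {f : V → ℝ} (hf : ∀ x ∉ S, f x = 0) :
    dirichletForm G (hitProb G S a) f = f a * graphLaplacian G (hitProb G S a) a := by
  rw [dirichletForm_eq_sum_mul_graphLaplacian _ hf]
  refine Finset.sum_eq_single a (fun x hx hxa => ?_) fun ha => ?_
  · rw [graphLaplacian_hitProb ⟨hx, hxa⟩, mul_zero]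
  · rw [hf a ha, zero_mul]

lemma eEnergy_hitProb_mul_effRes_le_one :
    eEnergy G (hitProb G S a) * effRes G {a} (S : Set V)ᶜ ≤ 1 := by
  have hmin : eEnergy G (hitProb G S a) ≤
      ⨅ f ∈ {f : V → ℝ | (∀ x ∈ ({a} : Set V), f x = 1) ∧ ∀ x ∈ (S : Set V)ᶜ, f x = 0},
        eEnergy G f := by
    refine le_iInf₂ fun f ⟨hfa, hf⟩ => ?_
    have hfa : f a = 1 := hfa a rfl
    have ha : a ∈ (S : Set V) := by
      by_contra ha
      exact one_ne_zero (hfa.symm.trans (hf a ha))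
    have hu : ∀ x ∉ S, hitProb G S a x = 0 := fun x hx => hitProb_of_notMem hx
    rw [eEnergy_eq_ofReal_dirichletForm hu, eEnergy_eq_ofReal_dirichletForm hf]
    refine ENNReal.ofReal_le_ofReal (dirichletForm_self_le_of_harmonic (A := {a}) hu hf ?_ ?_)
    · rintro x rfl
      rw [hfa, hitProb_self ha]
    · exact fun x hx hxa => graphLaplacian_hitProb ⟨hx, hxa⟩
  calc eEnergy G (hitProb G S a) * effRes G {a} (S : Set V)ᶜ
      ≤ (effRes G {a} (S : Set V)ᶜ)⁻¹ * effRes G {a} (S : Set V)ᶜ := by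
        gcongr
        rwa [effRes, inv_inv]
    _ ≤ 1 := ENNReal.inv_mul_le_one _

lemma dirichletForm_hitPotential (ha : a ∈ S) :
    dirichletForm G (hitPotential G S a b) (hitPotential G S a b) =
      hitPotential G S a b a * dirichletForm G (hitProb G S a) (hitProb G S a) := by
  have hu : ∀ x ∉ S, hitProb G S a x = 0 := fun x hx => hitProb_of_notMem hx
  have hq : ∀ x ∉ S, hitPotential G S a b x = 0 := fun x hx => hitPotential_of_notMem hx
  calc dirichletForm G (hitPotential G S a b) (hitPotential G S a b)
      = dirichletForm G (hitProb G S a) (hitPotential G S a b)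
          - hitProb G S a b * dirichletForm G (hitProb G S b) (hitPotential G S a b) := by
        rw [← dirichletForm_const_mul_left, ← dirichletForm_sub_left _ _ hq]
        rfl
    _ = hitPotential G S a b a * graphLaplacian G (hitProb G S a) a := by
        rw [dirichletForm_hitProb_left hq, dirichletForm_hitProb_left hq, hitPotential_right,
          zero_mul, mul_zero, sub_zero]
    _ = hitPotential G S a b a * dirichletForm G (hitProb G S a) (hitProb G S a) := by
        rw [dirichletForm_hitProb_left hu, hitProb_self (Finset.mem_coe.2 ha), one_mul]

lemma ofReal_hitPotential_left_le (hab : G.Reachable a b) (ha : a ∈ S) :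
    ENNReal.ofReal (hitPotential G S a b a) ≤ G.dist a b * eEnergy G (hitProb G S a) := by
  obtain hq | hq := le_or_gt (hitPotential G S a b a) 0
  · rw [ENNReal.ofReal_of_nonpos hq]
    exact zero_le
  have hpath := ofReal_sq_sub_le_dist_mul_eEnergy hab (hitPotential G S a b)
  rw [hitPotential_right, sub_zero, sq, ENNReal.ofReal_mul hq.le,
    eEnergy_eq_ofReal_dirichletForm fun x hx => hitPotential_of_notMem hx,
    dirichletForm_hitPotential ha, ENNReal.ofReal_mul hq.le,
    ← eEnergy_eq_ofReal_dirichletForm fun x hx => hitProb_of_notMem hx, mul_left_comm] at hpath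
  exact (ENNReal.mul_le_mul_iff_right (ENNReal.ofReal_pos.2 hq).ne'
    ENNReal.ofReal_ne_top).1 hpath

theorem ofReal_one_sub_hitProb_mul_hitProb_mul_effRes_le_dist (hab : G.Reachable a b) :
    ENNReal.ofReal (1 - hitProb G S a b * hitProb G S b a) * effRes G {a} (S : Set V)ᶜ ≤
      G.dist a b := by
  by_cases ha : a ∈ S
  · calc ENNReal.ofReal (1 - hitProb G S a b * hitProb G S b a) * effRes G {a} (S : Set V)ᶜ
        ≤ G.dist a b * eEnergy G (hitProb G S a) * effRes G {a} (S : Set V)ᶜ := by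
          gcongr
          rw [← hitPotential_left (Finset.mem_coe.2 ha)]
          exact ofReal_hitPotential_left_le hab ha
      _ ≤ G.dist a b := by
          rw [mul_assoc]
          exact mul_le_of_le_one_right' eEnergy_hitProb_mul_effRes_le_one
  · have hmem : a ∈ ({a} : Set V) ∩ (S : Set V)ᶜ :=
      ⟨Set.mem_singleton a, mt Finset.mem_coe.1 ha⟩
    rw [effRes_eq_zero_of_mem_inter hmem, mul_zero]
    exact zero_le

end HittingAndResistance

lemma finite_setOf_dist_le {G : SimpleGraph V} (hconn : G.Connected)
    (hlf : ∀ v : V, (G.neighborSet v).Finite) (v : V) (n : ℕ) :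
    {x : V | G.dist v x ≤ n}.Finite := by
  induction n with
  | zero => simp [hconn.dist_eq_zero_iff]
  | succ n ih =>
    refine ((ih.biUnion fun x _ => hlf x).insert v).subset fun x hx => ?_
    rw [Set.mem_ofPred_eq, SimpleGraph.dist_comm] at hx
    obtain ⟨p, hp⟩ := hconn.exists_walk_length_eq_dist x v
    cases p with
    | nil => exact Set.mem_insert _ _
    | @cons _ w _ hxw p =>
      rw [SimpleGraph.Walk.length_cons] at hp
      have hw : G.dist v w ≤ n := by
        have := SimpleGraph.dist_le p
        rw [SimpleGraph.dist_comm]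
        omega
      exact Or.inr (Set.mem_biUnion hw hxw.symm)

lemma finite_setOf_dist_lt {G : SimpleGraph V} (hconn : G.Connected)
    (hlf : ∀ v : V, (G.neighborSet v).Finite) (v : V) (R : ℝ) :
    {x : V | (G.dist v x : ℝ) < R}.Finite :=
  (finite_setOf_dist_le hconn hlf v ⌈R⌉₊).subset fun _ hx =>
    Nat.cast_le.1 ((le_of_lt hx).trans (Nat.le_ceil R))

lemma one_sub_div_one_sub_le {t : ℝ} (ht₀ : 0 ≤ t) (ht₁ : t < 1) : 1 - t / (1 - t) ≤ 1 - t :=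
  sub_le_sub_left (le_div_self ht₀ (by linarith) (by linarith)) 1

lemma one_sub_two_mul_le {t : ℝ} (ht₀ : 0 ≤ t) (ht : t ≤ 1 / 2) :
    1 - 2 * t ≤ 1 - t / (1 - t) := by
  refine sub_le_sub_left ?_ 1
  rw [div_le_iff₀ (by linarith)]
  nlinarith

theorem hit_before_exit_general (G : SimpleGraph V) (hlf : ∀ v : V, (G.neighborSet v).Finite)
    (v₀ : V) (R lam ε : ℝ) (hlam : 0 < lam) (B : Set V) (hB : B.Finite)
    (hres : ENNReal.ofReal (R / lam) ≤ effRes G {v₀} Bᶜ) (hε0 : 0 < ε)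
    (y : V) (hreach : G.Reachable v₀ y) (hy : (G.dist v₀ y : ℝ) < ε * R) :
    (1 - ε * lam ≤ ∑' k : ℕ, firstHitP G B v₀ k y) ∧
    (1 - ε * lam ≤ ∑' k : ℕ, firstHitP G B y k v₀) := by
  let _ : G.LocallyFinite := fun v => (hlf v).fintype
  lift B to Finset V using hB
  have hR : 0 < R := pos_of_mul_pos_right ((Nat.cast_nonneg _).trans_lt hy) hε0.le
  have hdist : (1 - hitProb G B v₀ y * hitProb G B y v₀) * (R / lam) ≤ G.dist v₀ y := by
    rw [← ENNReal.ofReal_le_natCast, ENNReal.ofReal_mul' (by positivity)]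
    exact (mul_le_mul_right hres _).trans
      (ofReal_one_sub_hitProb_mul_hitProb_mul_effRes_le_dist hreach)
  have hprod : 1 - ε * lam ≤ hitProb G B v₀ y * hitProb G B y v₀ := by
    have hlt : (1 - hitProb G B v₀ y * hitProb G B y v₀) * (R / lam) < ε * lam * (R / lam) :=
      hdist.trans_lt (hy.trans_eq (by field_simp))
    linarith [lt_of_mul_lt_mul_right hlt (by positivity)]
  exact ⟨hprod.trans (mul_le_of_le_one_right (hitProb_nonneg y) (hitProb_le_one v₀)),
    hprod.trans (mul_le_of_le_one_left (hitProb_nonneg v₀) (hitProb_le_one y))⟩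

/-- hitting probability versus exit probability (Lemma 2.3 of the paper).
Let `λ ≥ 1`, suppose `Reff(0, B(0,R)ᶜ) ≥ R/λ`, and let `0 < ε ≤ 1/(2λ)`. Then for every
`y ∈ B(0,εR)`, the walk started at `y` hits `0` before exiting `B(0,R)` with probability at
least `1 − ελ/(1−ελ) ≥ 1 − 2ελ`, and the walk started at `0` hits `y` before exiting
`B(0,R)` with probability at least `1 − ελ`. -/
theorem hit_before_exit (G : SimpleGraph V) [Infinite V]
    (hconn : G.Connected) (hlf : ∀ v : V, (G.neighborSet v).Finite)
    (v₀ : V) (R lam ε : ℝ) (hlam : 1 ≤ lam)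
    (Bset : Set V) (hBset : Bset = {y : V | (G.dist v₀ y : ℝ) < R})
    (hres : ENNReal.ofReal (R / lam) ≤ effRes G {v₀} Bsetᶜ)
    (hε0 : 0 < ε) (hε : ε ≤ 1 / (2 * lam))
    (y : V) (hy : (G.dist v₀ y : ℝ) < ε * R) :
    (1 - ε * lam / (1 - ε * lam) ≤ ∑' k : ℕ, firstHitP G Bset v₀ k y) ∧
    (1 - 2 * ε * lam ≤ 1 - ε * lam / (1 - ε * lam)) ∧
    (1 - ε * lam ≤ ∑' k : ℕ, firstHitP G Bset y k v₀) := by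
  obtain ⟨hfrom_y, hfrom_v₀⟩ := hit_before_exit_general G hlf v₀ R lam ε (by positivity) Bset
    (hBset ▸ finite_setOf_dist_lt hconn hlf v₀ R) hres hε0 y (hconn v₀ y) hy
  have hnonneg : 0 ≤ ε * lam := by positivity
  have hhalf : ε * lam ≤ 1 / 2 := by
    rw [le_div_iff₀ (by positivity)] at hε
    linarith
  exact ⟨(one_sub_div_one_sub_le hnonneg (by linarith)).trans hfrom_y,
    mul_assoc 2 ε lam ▸ one_sub_two_mul_le hnonneg hhalf, hfrom_v₀⟩
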